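/- Let s be a complex number with Re(s) > 0, and let k, v be real numbers with k > 2 and 0 < v ≤ 2. Then (2/π) · ∫_{k−v}^{k+v} u^{s+1} / √( 4k²v² − (u² − v² − k²)² ) du = k^s · ₂F₁(−s/2, −s/2; 1; v²/k²). -/

import Mathlib

open MeasureTheory Real

/-- The Pochhammer symbol `(a)_n = a (a+1) ⋯ (a+n-1)` for a complex number `a`. -/
noncomputable def cpoch (a : ℂ) (n : ℕ) : ℂ := ∏ i ∈ Finset.range n, (a + i)

/-- The Gauss hypergeometric series `₂F₁(a,b; c; z)`. -/
noncomputable def F21 (a b c z : ℂ) : ℂ :=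
  ∑' n : ℕ, (cpoch a n * cpoch b n) / cpoch c n * z ^ n / (n.factorial : ℂ)

lemma aux_hasSum (a z : ℂ) (hz : ‖z‖ < 1) :
    HasSum (fun n : ℕ => Ring.choose a n * z ^ n) ((1 + z) ^ a) := by
  have h := (Complex.one_add_cpow_hasFPowerSeriesOnBall_zero (a := a)).hasSum (y := z) (by
    rw [← ENNReal.ofReal_one, Metric.eball_ofReal]; simpa using hz)
  simp only [binomialSeries_apply, List.ofFn_const, List.prod_replicate, smul_eq_mul,
    zero_add] at h
  exact h

lemma aux_cpoch (a : ℂ) (n : ℕ) :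
    cpoch (-a) n = (-1) ^ n * (n.factorial : ℂ) * Ring.choose a n := by
  have h : cpoch (-a) n = (-1) ^ n * (descPochhammer ℤ n).smeval a := by
    induction n with
    | zero => simp [cpoch]
    | succ n ih =>
      have : cpoch (-a) (n+1) = cpoch (-a) n * (-a + n) := by
        simp [cpoch, Finset.prod_range_succ]
      rw [this, ih]
      simp [descPochhammer_succ_right, Polynomial.smeval_mul, Polynomial.smeval_natCast]
      ring
  rw [h, Ring.descPochhammer_eq_factorial_smul_choose, nsmul_eq_mul, mul_assoc]

lemma aux_cpoch_one (n : ℕ) : cpoch 1 n = (n.factorial : ℂ) := by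
  induction n with
  | zero => simp [cpoch]
  | succ n ih =>
    have : cpoch 1 (n+1) = cpoch 1 n * (1 + n) := by
      simp [cpoch, Finset.prod_range_succ]
    rw [this, ih, Nat.factorial_succ]; push_cast; ring

lemma aux_prod (s z : ℂ) (hz : ‖z‖ < 1) :
    (1 + z) ^ (s / 2) * (1 + (starRingEnd ℂ) z) ^ (s / 2) = ((‖1 + z‖ : ℝ) : ℂ) ^ s := by
  have hm := Complex.mem_slitPlane_of_norm_lt_one hz
  have h0 := Complex.slitPlane_ne_zero hm
  have e : 1 + (starRingEnd ℂ) z = (starRingEnd ℂ) (1 + z) := by simp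
  have h1 : (starRingEnd ℂ) (1 + z) ≠ 0 := (map_ne_zero _).2 h0
  have h2 : ((‖1 + z‖ : ℝ) : ℂ) ≠ 0 := by simpa using h0
  rw [e, Complex.cpow_def_of_ne_zero h0, Complex.cpow_def_of_ne_zero h1,
    Complex.cpow_def_of_ne_zero h2, Complex.log_conj _ (Complex.slitPlane_arg_ne_pi hm),
    ← Complex.exp_add, ← add_mul, Complex.add_conj, Complex.log_re,
    ← Complex.ofReal_log (norm_nonneg _)]
  congr 1
  push_cast
  ring

lemma aux_orth (n m : ℕ) :
    ∫ θ in (-π)..π, Complex.exp (((n : ℂ) - m) * Complex.I * θ) =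
      if n = m then 2 * (π : ℂ) else 0 := by
  split_ifs with h
  · subst h; simp; ring
  · have : ((n : ℂ) - m) * Complex.I ≠ 0 := by
      refine mul_ne_zero (sub_ne_zero.2 (by exact_mod_cast h)) Complex.I_ne_zero
    rw [integral_exp_mul_complex this, div_eq_zero_iff, sub_eq_zero]
    left
    rw [Complex.exp_eq_exp_iff_exists_int]
    refine ⟨(n : ℤ) - m, ?_⟩
    push_cast
    ring

lemma aux_exp (A B : ℂ) (r θ : ℝ) (n m : ℕ) :
    (A * (r : ℂ) ^ n) * (B * (r : ℂ) ^ m) * Complex.exp (((n : ℂ) - m) * Complex.I * θ) =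
    (A * (r * Complex.exp (θ * Complex.I)) ^ n) *
      (B * ((starRingEnd ℂ) (r * Complex.exp (θ * Complex.I))) ^ m) := by
  have e : (starRingEnd ℂ) (r * Complex.exp (θ * Complex.I)) =
      r * Complex.exp (-(θ * Complex.I)) := by
    simp [← Complex.exp_conj]
  have e2 : Complex.exp (((n : ℂ) - m) * Complex.I * θ) =
      Complex.exp (n * (θ * Complex.I)) * Complex.exp (m * -(θ * Complex.I)) := by
    rw [← Complex.exp_add]; congr 1; ring
  rw [e, mul_pow, mul_pow, ← Complex.exp_nat_mul, ← Complex.exp_nat_mul, e2]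
  ring

lemma aux_mul (f g : ℕ → ℂ) (x y : ℂ) (h1 : HasSum f x) (h2 : HasSum g y) :
    HasSum (fun p : ℕ × ℕ => f p.1 * g p.2) (x * y) :=
  h1.mul h2 (summable_mul_of_summable_norm h1.summable.norm h2.summable.norm)

lemma aux_term (s : ℂ) (r θ : ℝ) (hr0 : 0 ≤ r) (hr : r < 1) :
    HasSum (fun p : ℕ × ℕ => (Ring.choose (s/2) p.1 * (r : ℂ) ^ p.1) *
      (Ring.choose (s/2) p.2 * (r : ℂ) ^ p.2)
      * Complex.exp (((p.1 : ℂ) - p.2) * Complex.I * θ))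
      (((‖1 + r * Complex.exp (θ * Complex.I)‖ : ℝ) : ℂ) ^ s) := by
  have hn : ‖(r : ℂ) * Complex.exp (θ * Complex.I)‖ < 1 := by
    rw [norm_mul, Complex.norm_exp_ofReal_mul_I]; simpa [abs_of_nonneg hr0] using hr
  have hn' : ‖(starRingEnd ℂ) ((r : ℂ) * Complex.exp (θ * Complex.I))‖ < 1 := by
    rwa [Complex.norm_conj]
  have h1 := aux_hasSum (s/2) _ hn
  have h2 := aux_hasSum (s/2) _ hn'
  have h3 := aux_mul _ _ _ _ h1 h2
  rw [aux_prod s _ hn] at h3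
  have hf := funext fun p : ℕ × ℕ =>
    aux_exp (Ring.choose (s/2) p.1) (Ring.choose (s/2) p.2) r θ p.1 p.2
  rw [hf]
  exact h3

lemma aux_int (s : ℂ) (r : ℝ) (hr0 : 0 ≤ r) (hr : r < 1) :
    ∫ θ in (-π)..π, ((‖1 + r * Complex.exp (θ * Complex.I)‖ : ℝ) : ℂ) ^ s =
      2 * π * F21 (-(s / 2)) (-(s / 2)) 1 ((r ^ 2 : ℝ) : ℂ) := by
  have hb : Summable (fun p : ℕ × ℕ =>
      ‖(Ring.choose (s/2) p.1 * (r:ℂ) ^ p.1) * (Ring.choose (s/2) p.2 * (r:ℂ) ^ p.2)‖) := by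
    have h1 := (aux_hasSum (s/2) (r : ℂ) (by simpa [abs_of_nonneg hr0] using hr)).summable.norm
    exact (summable_mul_of_summable_norm h1 h1).norm
  have key := intervalIntegral.hasSum_integral_of_dominated_convergence (μ := volume)
    (a := -π) (b := π)
    (F := fun (p : ℕ × ℕ) (θ : ℝ) =>
      (Ring.choose (s/2) p.1 * (r:ℂ) ^ p.1) * (Ring.choose (s/2) p.2 * (r:ℂ) ^ p.2)
      * Complex.exp (((p.1 : ℂ) - p.2) * Complex.I * θ))
    (f := fun θ => ((‖1 + r * Complex.exp (θ * Complex.I)‖ : ℝ) : ℂ) ^ s)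
    (fun p _ => ‖(Ring.choose (s/2) p.1 * (r:ℂ) ^ p.1) * (Ring.choose (s/2) p.2 * (r:ℂ) ^ p.2)‖)
    (fun p => (by fun_prop : Continuous _).aestronglyMeasurable)
    (fun p => Filter.Eventually.of_forall fun θ _ => by
      have : ((p.1 : ℂ) - p.2) * Complex.I * θ = (((p.1 : ℝ) - p.2) * θ : ℝ) * Complex.I := by
        push_cast; ring
      rw [norm_mul, this, Complex.norm_exp_ofReal_mul_I, mul_one])
    (Filter.Eventually.of_forall fun θ _ => hb)
    intervalIntegrable_const
    (Filter.Eventually.of_forall fun θ _ => aux_term s r θ hr0 hr)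
  simp only [intervalIntegral.integral_const_mul, aux_orth] at key
  have inj : Function.Injective (fun n : ℕ => (n, n)) := fun a b h => (Prod.ext_iff.1 h).1
  rw [← inj.hasSum_iff] at key
  · rw [← key.tsum_eq, F21, ← tsum_mul_left]
    congr 1; ext n
    have hf : (n.factorial : ℂ) ≠ 0 := by exact_mod_cast n.factorial_ne_zero
    have h1 : ((-1 : ℂ) ^ n) * (-1) ^ n = 1 := by rw [← mul_pow]; simp
    simp only [Function.comp, if_true, aux_cpoch, aux_cpoch_one]
    push_cast
    field_simp
    linear_combination (-(r:ℂ)^n * r^n * (Ring.choose (s/2) n)^2 : ℂ) * h1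
  · rintro ⟨n, m⟩ h
    have : n ≠ m := fun e => h ⟨n, by simp [e]⟩
    simp [this]

lemma aux_pos (k v θ : ℝ) (hv0 : 0 < v) (hvk : v < k) :
    0 < k^2 + v^2 + 2 * k * v * Real.cos θ := by
  have h : 0 ≤ k * v * (1 + Real.cos θ) :=
    mul_nonneg (by nlinarith) (by linarith [Real.neg_one_le_cos θ])
  nlinarith [sq_pos_of_pos (sub_pos.2 hvk)]

lemma aux_norm (k v θ : ℝ) (hv0 : 0 < v) (hvk : v < k) :
    Real.sqrt (k^2 + v^2 + 2 * k * v * Real.cos θ) =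
      k * ‖1 + ((v / k : ℝ) : ℂ) * Complex.exp (θ * Complex.I)‖ := by
  have hk : 0 < k := hv0.trans hvk
  have hn : ‖1 + ((v / k : ℝ) : ℂ) * Complex.exp (θ * Complex.I)‖ ^ 2 =
      1 + (v/k)^2 + 2 * (v/k) * Real.cos θ := by
    rw [Complex.sq_norm, Complex.exp_mul_I, Complex.normSq_apply]
    simp only [Complex.add_re, Complex.add_im, Complex.mul_re, Complex.mul_im, Complex.one_re,
      Complex.one_im, Complex.ofReal_re, Complex.ofReal_im, ← Complex.ofReal_cos,
      ← Complex.ofReal_sin, Complex.I_re, Complex.I_im]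
    ring_nf
    linear_combination (v^2 * k⁻¹^2) * (Real.sin_sq_add_cos_sq θ)
  rw [← Real.sqrt_sq (by positivity : 0 ≤ k * ‖1 + ((v / k : ℝ) : ℂ) * Complex.exp (θ * Complex.I)‖),
    mul_pow, hn]
  congr 1
  field_simp

lemma aux_image (k v : ℝ) (hv0 : 0 < v) (hvk : v < k) :
    (fun θ => Real.sqrt (k^2 + v^2 + 2 * k * v * Real.cos θ)) '' Set.Ioo 0 π =
      Set.Ioo (k - v) (k + v) := by
  have hk : 0 < k := hv0.trans hvk
  have hkv : 0 < k * v := mul_pos hk hv0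
  ext u
  constructor
  · rintro ⟨θ, hθ, rfl⟩
    have h1 : Real.cos θ < 1 := by
      have := Real.cos_lt_cos_of_nonneg_of_le_pi le_rfl hθ.2.le hθ.1
      simpa using this
    have h2 : -1 < Real.cos θ := by
      have := Real.cos_lt_cos_of_nonneg_of_le_pi hθ.1.le le_rfl hθ.2
      simpa using this
    constructor
    · apply Real.lt_sqrt_of_sq_lt
      nlinarith
    · rw [Real.sqrt_lt' (by positivity)]
      nlinarith
  · rintro ⟨h1, h2⟩
    have hu : 0 < u := by linarith
    have a1 : -1 < (u^2 - k^2 - v^2) / (2 * k * v) := by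
      rw [lt_div_iff₀ (by positivity)]; nlinarith
    have a2 : (u^2 - k^2 - v^2) / (2 * k * v) < 1 := by
      rw [div_lt_iff₀ (by positivity)]; nlinarith
    refine ⟨Real.arccos ((u^2 - k^2 - v^2) / (2 * k * v)), ⟨?_, ?_⟩, ?_⟩
    · rwa [Real.arccos_pos]
    · exact lt_of_le_of_ne (Real.arccos_le_pi _) (fun h => by
        rw [Real.arccos_eq_pi] at h; linarith)
    · simp only
      rw [Real.cos_arccos a1.le a2.le, Real.sqrt_eq_iff_mul_self_eq_of_pos hu]
      field_simp
      ring

lemma aux_subst (s : ℂ) (k v : ℝ) (hv0 : 0 < v) (hvk : v < k) :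
    ∫ u in (k - v)..(k + v),
          (u : ℂ) ^ (s + 1) /
            (Real.sqrt (4 * k ^ 2 * v ^ 2 - (u ^ 2 - v ^ 2 - k ^ 2) ^ 2) : ℂ) =
      ∫ θ in (0:ℝ)..π, (1 / 2 : ℂ) *
        (Real.sqrt (k^2 + v^2 + 2 * k * v * Real.cos θ) : ℂ) ^ s := by
  have hk : 0 < k := hv0.trans hvk
  have hkv : 0 < k * v := mul_pos hk hv0
  rw [intervalIntegral.integral_of_le (by linarith), intervalIntegral.integral_of_le pi_pos.le,
    integral_Ioc_eq_integral_Ioo, integral_Ioc_eq_integral_Ioo, ← aux_image k v hv0 hvk]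
  rw [integral_image_eq_integral_abs_deriv_smul
    (f' := fun θ => (2 * k * v * (-Real.sin θ)) /
      (2 * Real.sqrt (k^2 + v^2 + 2 * k * v * Real.cos θ))) measurableSet_Ioo]
  · refine setIntegral_congr_fun measurableSet_Ioo fun θ hθ => ?_
    have hp := aux_pos k v θ hv0 hvk
    have hsin := Real.sin_pos_of_mem_Ioo hθ
    have hsq := Real.sq_sqrt hp.le
    have hsp := Real.sqrt_pos.2 hp
    have e1 : Real.sqrt (4 * k ^ 2 * v ^ 2 -
        (Real.sqrt (k^2 + v^2 + 2 * k * v * Real.cos θ) ^ 2 - v ^ 2 - k ^ 2) ^ 2) =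
        2 * k * v * Real.sin θ := by
      rw [hsq, Real.sqrt_eq_iff_mul_self_eq_of_pos (by positivity)]
      linear_combination (4 * k^2 * v^2) * Real.sin_sq_add_cos_sq θ
    rw [e1]
    generalize Real.sqrt (k^2 + v^2 + 2 * k * v * Real.cos θ) = h at hsp
    have e2 : |2 * k * v * (-Real.sin θ) / (2 * h)| = 2 * k * v * Real.sin θ / (2 * h) := by
      rw [mul_neg, neg_div, abs_neg, abs_of_pos (by positivity)]
    have c1 : (h : ℂ) ≠ 0 := by exact_mod_cast hsp.ne'
    have c2 : ((Real.sin θ : ℝ) : ℂ) ≠ 0 := by exact_mod_cast hsin.ne'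
    have c3 : (k : ℂ) ≠ 0 := by exact_mod_cast hk.ne'
    have c4 : (v : ℂ) ≠ 0 := by exact_mod_cast hv0.ne'
    rw [e2, Complex.cpow_add _ _ c1, Complex.cpow_one, Complex.real_smul]
    simp only [Complex.ofReal_mul, Complex.ofReal_div, Complex.ofReal_ofNat]
    field_simp
  · intro θ _
    have hp := aux_pos k v θ hv0 hvk
    exact ((((Real.hasDerivAt_cos θ).const_mul (2 * k * v)).const_add (k^2 + v^2)).sqrt
      hp.ne').hasDerivWithinAt
  · intro x hx y hy hxy
    simp only at hxy
    rw [Real.sqrt_inj (aux_pos k v x hv0 hvk).le (aux_pos k v y hv0 hvk).le] at hxy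
    have : Real.cos x = Real.cos y := by
      have : (2 * (k * v)) * Real.cos x = (2 * (k * v)) * Real.cos y := by linarith
      exact mul_left_cancel₀ (by positivity) this
    exact Real.injOn_cos ⟨hx.1.le, hx.2.le⟩ ⟨hy.1.le, hy.2.le⟩ this

lemma aux_even (s : ℂ) (k v : ℝ) (hv0 : 0 < v) (hvk : v < k) :
    ∫ θ in (-π)..π, (Real.sqrt (k^2 + v^2 + 2 * k * v * Real.cos θ) : ℂ) ^ s =
      2 * ∫ θ in (0:ℝ)..π, (Real.sqrt (k^2 + v^2 + 2 * k * v * Real.cos θ) : ℂ) ^ s := by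
  have hc : Continuous fun θ : ℝ =>
      (Real.sqrt (k^2 + v^2 + 2 * k * v * Real.cos θ) : ℂ) ^ s := by
    refine Continuous.cpow (by fun_prop) continuous_const fun θ => ?_
    exact Complex.ofReal_mem_slitPlane.2 (Real.sqrt_pos.2 (aux_pos k v θ hv0 hvk))
  rw [← intervalIntegral.integral_add_adjacent_intervals (b := 0)
    (hc.intervalIntegrable _ _) (hc.intervalIntegrable _ _)]
  have := intervalIntegral.integral_comp_neg (a := 0) (b := π)
    (fun θ : ℝ => (Real.sqrt (k^2 + v^2 + 2 * k * v * Real.cos θ) : ℂ) ^ s)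
  simp only [Real.cos_neg, neg_zero] at this
  rw [← this]; ring

theorem integral_cpow_div_sqrt (s : ℂ) (hs : 0 < s.re) (k v : ℝ) (hk : 2 < k)
    (hv0 : 0 < v) (hv2 : v ≤ 2) :
    (2 / (π : ℂ)) *
        ∫ u in (k - v)..(k + v),
          (u : ℂ) ^ (s + 1) /
            (Real.sqrt (4 * k ^ 2 * v ^ 2 - (u ^ 2 - v ^ 2 - k ^ 2) ^ 2) : ℂ) =
      (k : ℂ) ^ s * F21 (-(s / 2)) (-(s / 2)) 1 (((v ^ 2 / k ^ 2 : ℝ)) : ℂ) := by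
  have hvk : v < k := by linarith
  have hk0 : 0 < k := by linarith
  have hA := aux_even s k v hv0 hvk
  have hB : ∫ θ in (-π)..π, (Real.sqrt (k^2 + v^2 + 2 * k * v * Real.cos θ) : ℂ) ^ s =
      (k : ℂ) ^ s * (2 * π * F21 (-(s / 2)) (-(s / 2)) 1 (((v ^ 2 / k ^ 2 : ℝ)) : ℂ)) := by
    rw [← div_pow, ← aux_int s (v / k) (by positivity) (by rwa [div_lt_one hk0]),
      ← intervalIntegral.integral_const_mul]
    congr 1; ext θ
    rw [aux_norm k v θ hv0 hvk, Complex.ofReal_mul,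
      Complex.mul_cpow_ofReal_nonneg hk0.le (norm_nonneg _)]
  rw [aux_subst s k v hv0 hvk, intervalIntegral.integral_const_mul]
  have hpi : (π : ℂ) ≠ 0 := by exact_mod_cast pi_ne_zero
  have := hA.symm.trans hB
  generalize (∫ θ in (0:ℝ)..π,
    (Real.sqrt (k^2 + v^2 + 2 * k * v * Real.cos θ) : ℂ) ^ s) = J at this ⊢
  generalize F21 (-(s / 2)) (-(s / 2)) 1 (((v ^ 2 / k ^ 2 : ℝ)) : ℂ) = G at this ⊢
  field_simp
  linear_combination this / 2
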